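/- Let X be a weakly c-dissipated compact Hausdorff space. Then every Radon measure μ on X is separable; that is, there is a countable family 𝒞 of Borel subsets of X such that for every Borel set A ⊆ X and every ε > 0 there is B ∈ 𝒞 with μ(A Δ B) < ε. -/

import Mathlib

open Set Topology

universe u

section Defs

variable {X Y K Z : Type*}

/-- A subset `S` of a topological space is *scattered* iff every nonempty subset `T ⊆ S`
has a point which is isolated in the subspace topology of `T`. -/
def IsScatteredSet [TopologicalSpace X] (S : Set X) : Prop :=
  ∀ T ⊆ S, T.Nonempty → ∃ x ∈ T, ∃ U : Set X, IsOpen U ∧ U ∩ T = {x}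

/-- A *loose family* for `f : X → Y` : a pairwise disjoint family `Ps` of closed subsets of `X`
such that for some non-scattered `Q ⊆ Y`, `f '' P = Q` for all `P ∈ Ps`. -/
def LooseFamily [TopologicalSpace X] [TopologicalSpace Y] (f : X → Y)
    (Ps : Set (Set X)) : Prop :=
  Ps.Pairwise Disjoint ∧ (∀ P ∈ Ps, IsClosed P) ∧
    ∃ Q : Set Y, ¬ IsScatteredSet Q ∧ ∀ P ∈ Ps, f '' P = Q

/-- `f` is `κ`-*tight* iff there is no loose family for `f` of cardinality `κ`. -/
def IsTightCard [TopologicalSpace X] [TopologicalSpace Y] (κ : Cardinal) (f : X → Y) : Prop :=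
  ¬ ∃ Ps : Set (Set X), LooseFamily f Ps ∧ Cardinal.mk Ps = κ

/-- `f` is *tight* iff it is `2`-tight. -/
def IsTight [TopologicalSpace X] [TopologicalSpace Y] (f : X → Y) : Prop :=
  IsTightCard 2 f

/-- A `K`-*loose function* for `f : X → Y` : a continuous `φ : D → K` with `D` closed in `X`,
such that for some non-scattered `Q ⊆ Y`, `φ(f⁻¹{y} ∩ D) = K` for all `y ∈ Q`. -/
def LooseFunction [TopologicalSpace X] [TopologicalSpace Y] [TopologicalSpace K]
    (f : X → Y) (D : Set X) (φ : X → K) : Prop :=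
  IsClosed D ∧ ContinuousOn φ D ∧
    ∃ Q : Set Y, ¬ IsScatteredSet Q ∧ ∀ y ∈ Q, φ '' (f ⁻¹' {y} ∩ D) = Set.univ

/-- `f` is *weakly c-tight* iff there is no `K`-loose function for `f`
with `K` the Cantor space `2^ω`. -/
def WeaklyCTight [TopologicalSpace X] [TopologicalSpace Y] (f : X → Y) : Prop :=
  ¬ ∃ (D : Set X) (φ : X → (ℕ → Bool)), LooseFunction f D φ

/-- `f` is *finer* than `g` iff `f x₁ = f x₂` implies `g x₁ = g x₂`. -/
def Finer (f : X → Y) (g : X → Z) : Prop :=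
  ∀ x₁ x₂ : X, f x₁ = f x₂ → g x₁ = g x₂

end Defs

/-- `X` is `κ`-*dissipated* iff every continuous map from `X` to a compact metrizable
space is refined by a `κ`-tight continuous map from `X` to a compact metrizable space. -/
def IsDissipatedCard (κ : Cardinal.{u}) (X : Type u) [TopologicalSpace X] : Prop :=
  ∀ (Z : Type u) [TopologicalSpace Z] [CompactSpace Z] [TopologicalSpace.MetrizableSpace Z],
    ∀ g : X → Z, Continuous g →
      ∃ (Y : Type u) (tY : TopologicalSpace Y),
        @CompactSpace Y tY ∧ @TopologicalSpace.MetrizableSpace Y tY ∧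
        ∃ f : X → Y, @Continuous X Y _ tY f ∧ @IsTightCard X Y _ tY κ f ∧ Finer f g

/-- `X` is *weakly c-dissipated* iff every continuous map from `X` to a compact metrizable
space is refined by a weakly c-tight continuous map from `X` to a compact metrizable space. -/
def IsWeaklyCDissipated (X : Type u) [TopologicalSpace X] : Prop :=
  ∀ (Z : Type u) [TopologicalSpace Z] [CompactSpace Z] [TopologicalSpace.MetrizableSpace Z],
    ∀ g : X → Z, Continuous g →
      ∃ (Y : Type u) (tY : TopologicalSpace Y),
        @CompactSpace Y tY ∧ @TopologicalSpace.MetrizableSpace Y tY ∧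
        ∃ f : X → Y, @Continuous X Y _ tY f ∧ @WeaklyCTight X Y _ tY f ∧ Finer f g

open MeasureTheory

/-!
By exhaustion there is a largest measurable set on which `μ` is separable, so it suffices to show
that a nonzero Radon measure `μ` that is non-separable on every set of positive measure cannot live
on a weakly c-dissipated space. Points are null for such a measure, and countably many continuous
functions suffice to make all fibres null; hence there is a weakly c-tight `f` with null fibres and
metrizable range. The Borel sets pulled back along `f` generate a separable measure algebra, so
modulo null sets they give all measurable sets on no set of positive measure. Consequently every
measurable `H` splits into two pieces each of which is seen by `f` over almost every point of the
essential image of `H`. Iterating the splitting, and approximating the pieces by closed sets with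
summable errors, gives a Cantor scheme of closed sets whose images have an intersection `Q` of
positive measure. As fibres are null, `Q` is not scattered, and by compactness each fibre over `Q`
meets every branch of the scheme, so that mapping points to branches is a loose function for `f`.
-/

section Measure

open Function

theorem exists_measurableSet_forall_ae_le {α : Type*} [MeasurableSpace α] (μ : Measure α)
    [IsFiniteMeasure μ] {p : Set α → Prop} (hp : Antitone p) (hp_empty : p ∅)
    (hp_iUnion : ∀ {ι : Type} [Countable ι] (s : ι → Set α), (∀ i, MeasurableSet (s i)) →
      Pairwise (Disjoint on s) → (∀ i, p (s i)) → p (⋃ i, s i)) :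
    ∃ s, MeasurableSet s ∧ p s ∧ ∀ t, MeasurableSet t → p t → t ≤ᵐ[μ] s := by
  let G : Set (Set α) := {s | MeasurableSet s ∧ p s}
  obtain ⟨u, -, hu, huG⟩ := exists_seq_tendsto_sSup (S := μ '' G)
    (.image _ ⟨∅, .empty, hp_empty⟩) (OrderTop.bddAbove _)
  choose s hsG hsu using huG
  have hs_meas : MeasurableSet (⋃ n, s n) := .iUnion fun n => (hsG n).1
  have hps : p (⋃ n, s n) := by
    rw [← iUnion_disjointed]
    exact hp_iUnion _ (.disjointed fun n => (hsG n).1) (disjoint_disjointed s)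
      fun n => hp (disjointed_subset s n) (hsG n).2
  have h_sup : sSup (μ '' G) ≤ μ (⋃ n, s n) :=
    le_of_tendsto' hu fun n => hsu n ▸ measure_mono (subset_iUnion s n)
  refine ⟨⋃ n, s n, hs_meas, hps, fun t ht hpt => ?_⟩
  have hG : (⋃ n, s n) ∪ t \ ⋃ n, s n ∈ G := by
    refine ⟨hs_meas.union (ht.diff hs_meas), ?_⟩
    rw [union_eq_iUnion]
    refine hp_iUnion _ (Bool.rec (ht.diff hs_meas) hs_meas) ?_ (Bool.rec (hp sdiff_subset hpt) hps)
    exact pairwise_disjoint_on_bool.2 disjoint_sdiff_right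
  have h_le : μ (⋃ n, s n) + μ (t \ ⋃ n, s n) ≤ μ (⋃ n, s n) + 0 := by
    rw [← measure_union disjoint_sdiff_right (ht.diff hs_meas), add_zero]
    exact (le_sSup (mem_image_of_mem μ hG)).trans h_sup
  rw [ae_le_set, ← nonpos_iff_eq_zero]
  exact ENNReal.le_of_add_le_add_left (measure_ne_top _ _) h_le

theorem mem_iUnion_inter_iff_of_pairwise_disjoint {α ι : Type*} {s t : ι → Set α}
    (ht : Pairwise (Disjoint on t)) {i : ι} {x : α} (hx : x ∈ t i) :
    x ∈ ⋃ j, s j ∩ t j ↔ x ∈ s i := by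
  refine ⟨fun h => ?_, fun h => mem_iUnion.2 ⟨i, h, hx⟩⟩
  obtain ⟨j, hsj, htj⟩ := mem_iUnion.1 h
  rwa [ht.eq (not_disjoint_iff.2 ⟨x, hx, htj⟩)]

theorem exists_pos_forall_measure_lt_of_absolutelyContinuous {α : Type*} [MeasurableSpace α]
    {μ ν : Measure α} [IsFiniteMeasure μ] [SigmaFinite ν] (h : μ ≪ ν) {ε : ENNReal} (hε : ε ≠ 0) :
    ∃ δ > 0, ∀ s, ν s < δ → μ s < ε := by
  obtain ⟨δ, hδ, H⟩ := exists_pos_setLIntegral_lt_of_measure_lt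
    (Measure.lintegral_rnDeriv_lt_top μ ν).ne hε
  exact ⟨δ, hδ, fun s hs => Measure.setLIntegral_rnDeriv h s ▸ H s hs⟩

theorem measure_iInter_list_ne_zero {α β : Type*} [MeasurableSpace α] [Countable β] {μ : Measure α}
    {Q : List β → Set α} (h : ∑' i : β × List β, μ (Q i.2 \ Q (i.1 :: i.2)) < μ (Q [])) :
    μ (⋂ l, Q l) ≠ 0 := by
  intro h0
  have hcover : Q [] ⊆ (⋂ l, Q l) ∪ ⋃ i : β × List β, Q i.2 \ Q (i.1 :: i.2) := by
    intro x hx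
    by_contra hxn
    simp only [mem_union, mem_iInter, mem_iUnion, Prod.exists, mem_sdiff, not_or, not_exists,
      not_and, not_not] at hxn
    exact hxn.1 (List.rec hx fun b l => hxn.2 b l)
  refine h.not_ge ?_
  calc μ (Q []) ≤ μ (⋂ l, Q l) + μ (⋃ i : β × List β, Q i.2 \ Q (i.1 :: i.2)) :=
        (measure_mono hcover).trans (measure_union_le _ _)
    _ ≤ ∑' i : β × List β, μ (Q i.2 \ Q (i.1 :: i.2)) := by
        rw [h0, zero_add]
        exact measure_iUnion_le _

theorem not_isScatteredSet_of_measure_ne_zero {Y : Type*} [TopologicalSpace Y]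
    [SecondCountableTopology Y] [MeasurableSpace Y] {ν : Measure Y} [NullSingletonClass ν]
    {Q : Set Y} (hQ : ν Q ≠ 0) : ¬ IsScatteredSet Q := by
  intro hscat
  let T := {x ∈ Q | ∀ U ∈ 𝓝[Q] x, 0 < ν U}
  have hQT : ν (Q \ T) = 0 := by
    by_contra h
    obtain ⟨x, ⟨hxQ, hxT⟩, hx⟩ := exists_mem_forall_mem_nhdsWithin_pos_measure h
    exact hxT ⟨hxQ, fun U hU => hx U (nhdsWithin_mono x sdiff_subset hU)⟩
  have hT : T.Nonempty := exists_mem_forall_mem_nhdsWithin_pos_measure hQ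
  obtain ⟨x, hxT, U, hU, hUT⟩ := hscat T (sep_subset _ _) hT
  have hxU : x ∈ U := (hUT.ge rfl).1
  refine (hxT.2 (Q ∩ U) (inter_mem_nhdsWithin Q (hU.mem_nhds hxU))).ne' ?_
  refine measure_mono_null (fun z hz => ?_) (measure_union_null hQT (measure_singleton x))
  by_cases hzT : z ∈ T
  · exact .inr (hUT.le ⟨hz.2, hzT⟩)
  · exact .inl ⟨hz.1, hzT⟩

end Measure

section EssGenerated

open Function MeasurableSpace

variable {X : Type*}

/-- The σ-algebra `m₀` *essentially generates* the measure algebra of `μ`: every measurable set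
agrees `μ`-almost everywhere with a set in `m₀`. -/
def EssGenerates (m₀ : MeasurableSpace X) {mX : MeasurableSpace X} (μ : Measure X) : Prop :=
  mX ≤ eventuallyMeasurableSpace m₀ (ae μ)

/-- The measure algebra of `μ` is countably generated as a σ-complete Boolean algebra. For finite
measures this is separability. -/
def IsEssCountablyGenerated {mX : MeasurableSpace X} (μ : Measure X) : Prop :=
  ∃ m₀ ≤ mX, @CountablyGenerated X m₀ ∧ EssGenerates m₀ μ

variable {m₀ mX : MeasurableSpace X} {μ ν : Measure X}

theorem EssGenerates.mono_ae (h : EssGenerates m₀ ν) (hμν : ae μ ≤ ae ν) : EssGenerates m₀ μ :=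
  fun A hA => let ⟨B, hB, hAB⟩ := h A hA; ⟨B, hB, hAB.filter_mono hμν⟩

theorem IsEssCountablyGenerated.mono_ae (h : IsEssCountablyGenerated ν) (hμν : ae μ ≤ ae ν) :
    IsEssCountablyGenerated μ :=
  let ⟨m₀, hle, hcg, hgen⟩ := h; ⟨m₀, hle, hcg, hgen.mono_ae hμν⟩

theorem countablyGenerated_iSup {α ι : Type*} [Countable ι] {m : ι → MeasurableSpace α}
    (h : ∀ i, @CountablyGenerated α (m i)) : @CountablyGenerated α (⨆ i, m i) := by
  choose b hb_countable hb using fun i => (h i).isCountablyGenerated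
  refine @CountablyGenerated.mk _ (_) ⟨⋃ i, b i, countable_iUnion hb_countable, ?_⟩
  simp only [hb, iSup_generateFrom]

theorem isEssCountablyGenerated_zero : IsEssCountablyGenerated (0 : Measure X) :=
  ⟨⊥, bot_le, @CountablyGenerated.mk _ ⊥ ⟨∅, countable_empty, by simp⟩, fun _ _ =>
    ⟨∅, @MeasurableSet.empty _ ⊥, by simp [Filter.EventuallyEq]⟩⟩

theorem isEssCountablyGenerated_restrict_singleton [MeasurableSingletonClass X] (x : X) :
    IsEssCountablyGenerated (μ.restrict {x}) := by
  refine ⟨⊥, bot_le, @CountablyGenerated.mk _ ⊥ ⟨∅, countable_empty, by simp⟩, fun A _ => ?_⟩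
  have h_ae : ∀ᵐ z ∂μ.restrict {x}, z = x := ae_restrict_mem (measurableSet_singleton x)
  by_cases hx : x ∈ A
  · refine ⟨univ, @MeasurableSet.univ _ ⊥, Filter.eventuallyEq_univ.2 ?_⟩
    filter_upwards [h_ae] with z rfl using hx
  · refine ⟨∅, @MeasurableSet.empty _ ⊥, Filter.eventuallyEq_empty.2 ?_⟩
    filter_upwards [h_ae] with z rfl using hx

theorem isEssCountablyGenerated_restrict_iUnion {ι : Type*} [Countable ι] {s : ι → Set X}
    (hs : ∀ i, MeasurableSet (s i)) (hdisj : Pairwise (Disjoint on s))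
    (h : ∀ i, IsEssCountablyGenerated (μ.restrict (s i))) :
    IsEssCountablyGenerated (μ.restrict (⋃ i, s i)) := by
  choose m hm_le hm_cg hm_gen using h
  refine ⟨(⨆ i, m i) ⊔ generateFrom (range s), sup_le (iSup_le hm_le) ?_, ?_, fun A hA => ?_⟩
  · exact generateFrom_le (forall_mem_range.2 hs)
  · exact (countablyGenerated_iSup hm_cg).sup
      (@CountablyGenerated.mk _ (generateFrom _) ⟨range s, countable_range s, rfl⟩)
  choose B hB hAB using fun i => hm_gen i A hA
  refine ⟨⋃ i, B i ∩ s i, ?_, ?_⟩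
  · refine @MeasurableSet.iUnion _ _ (_) _ _ fun i => @MeasurableSet.inter _ (_) _ _ ?_ ?_
    · exact (le_iSup m i).trans le_sup_left _ (hB i)
    · exact le_sup_right (a := ⨆ i, m i) _ (measurableSet_generateFrom ⟨i, rfl⟩)
  · rw [ae_restrict_iUnion_eq s]
    refine Filter.eventually_iSup.2 fun i => ?_
    filter_upwards [hAB i, ae_restrict_mem (hs i)] with x hx hxs
    exact hx.trans (propext (mem_iUnion_inter_iff_of_pairwise_disjoint hdisj hxs).symm)

theorem EssGenerates.measureDense [IsFiniteMeasure μ] (h : EssGenerates m₀ μ) (hle : m₀ ≤ mX)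
    {𝒜 : Set (Set X)} (h𝒜 : @Measure.MeasureDense X m₀ (μ.trim hle) 𝒜) : μ.MeasureDense 𝒜 := by
  obtain ⟨h_meas, h_approx⟩ := h𝒜
  refine ⟨fun s hs => hle s (h_meas s hs), fun s hs _ ε hε => ?_⟩
  obtain ⟨t, ht, hst⟩ := h s hs
  obtain ⟨u, hu, htu⟩ := h_approx t ht (measure_ne_top _ _) ε hε
  rw [trim_measurableSet_eq hle (ht.symmDiff (h_meas u hu))] at htu
  exact ⟨u, hu, (measure_congr (hst.symmDiff (ae_eq_refl u))).trans_lt htu⟩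

theorem IsEssCountablyGenerated.isSeparable [IsFiniteMeasure μ] (h : IsEssCountablyGenerated μ) :
    MeasureTheory.IsSeparable μ := by
  obtain ⟨m₀, hle, _, hgen⟩ := h
  obtain ⟨𝒜, h𝒜_countable, h𝒜⟩ := @exists_countable_measureDense X m₀ (μ.trim hle) inferInstance
  exact @IsSeparable.mk X mX μ ⟨𝒜, h𝒜_countable, hgen.measureDense hle h𝒜⟩

theorem exists_isEssCountablyGenerated_restrict_max (μ : Measure X) [IsFiniteMeasure μ] :
    ∃ s, MeasurableSet s ∧ IsEssCountablyGenerated (μ.restrict s) ∧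
      ∀ F, MeasurableSet F → IsEssCountablyGenerated ((μ.restrict sᶜ).restrict F) →
        μ.restrict sᶜ F = 0 := by
  obtain ⟨s, hs, hs_gen, hs_max⟩ := exists_measurableSet_forall_ae_le μ
    (p := fun s => IsEssCountablyGenerated (μ.restrict s))
    (fun _ _ hst h => h.mono_ae (ae_mono (Measure.restrict_mono_set μ hst)))
    (Measure.restrict_empty (μ := μ) ▸ isEssCountablyGenerated_zero)
    fun _ => isEssCountablyGenerated_restrict_iUnion
  refine ⟨s, hs, hs_gen, fun F hF h => ?_⟩
  rw [Measure.restrict_restrict hF] at h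
  have h_null := ae_le_set.1 (hs_max _ (hF.inter hs.compl) h)
  rwa [inter_sdiff_assoc, sdiff_eq, inter_self, ← Measure.restrict_apply hF] at h_null

end EssGenerated

section EssImage

open Function Filter

variable {X Y : Type*} {mX : MeasurableSpace X} [MeasurableSpace Y] {μ : Measure X}
  {f : X → Y} {H : Set X}

/-- The measure `μ` is *nowhere essentially generated* by `m₀`: the σ-algebra `m₀` essentially
generates the measure algebra of no restriction of `μ` to a set of positive measure. -/
def NowhereEssGenerates (m₀ : MeasurableSpace X) {_ : MeasurableSpace X} (μ : Measure X) :
    Prop :=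
  ∀ F, MeasurableSet F → EssGenerates m₀ (μ.restrict F) → μ F = 0

/-- The *essential image* of `H` under `f`: the points over which the conditional probability of
`H` given `f` is positive. As the support of a Radon–Nikodym derivative it is meaningful only up to
a `μ.map f`-null set. -/
def essImage (μ : Measure X) (f : X → Y) (H : Set X) : Set Y :=
  support (((μ.restrict H).map f).rnDeriv (μ.map f))

theorem measurableSet_essImage : MeasurableSet (essImage μ f H) :=
  measurableSet_support (Measure.measurable_rnDeriv _ _)

variable [IsFiniteMeasure μ]

theorem map_essImage_inter_eq_zero_iff (hf : Measurable f) {B : Set Y} (hB : MeasurableSet B) :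
    μ.map f (essImage μ f H ∩ B) = 0 ↔ μ (f ⁻¹' B ∩ H) = 0 := by
  have hac : (μ.restrict H).map f ≪ μ.map f := Measure.restrict_le_self.absolutelyContinuous.map hf
  rw [← Measure.restrict_apply (hf hB), ← Measure.map_apply hf hB,
    ← Measure.withDensity_rnDeriv_eq _ _ hac,
    withDensity_apply_eq_zero (Measure.measurable_rnDeriv _ _)]
  rfl

theorem map_essImage_eq_zero_iff (hf : Measurable f) : μ.map f (essImage μ f H) = 0 ↔ μ H = 0 := by
  simpa only [inter_univ, preimage_univ, univ_inter] using
    map_essImage_inter_eq_zero_iff (H := H) hf MeasurableSet.univ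

theorem essImage_ae_le_image (hf : Measurable f) (h : MeasurableSet (f '' H)) :
    essImage μ f H ≤ᵐ[μ.map f] f '' H := by
  rw [ae_le_set, Set.sdiff_eq, map_essImage_inter_eq_zero_iff hf h.compl, preimage_compl,
    inter_comm, ← Set.sdiff_eq, sdiff_eq_empty.2 (subset_preimage_image f H), measure_empty]

theorem measure_preimage_compl_essImage_inter (hf : Measurable f) (H : Set X) :
    μ (f ⁻¹' (essImage μ f H)ᶜ ∩ H) = 0 := by
  rw [← map_essImage_inter_eq_zero_iff hf measurableSet_essImage.compl, inter_compl_self,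
    measure_empty]

theorem ae_mem_essImage (hf : Measurable f) (H : Set X) :
    ∀ᵐ x ∂μ, x ∈ H → f x ∈ essImage μ f H := by
  have h := measure_eq_zero_iff_ae_notMem.1 (measure_preimage_compl_essImage_inter (μ := μ) hf H)
  filter_upwards [h] with x hx hxH
  by_contra hfx
  exact hx ⟨hfx, hxH⟩

theorem essImage_inter_ae_le (hf : Measurable f) {D : Set Y} (hD : MeasurableSet D) {H' : Set X}
    (h : f ⁻¹' D ∩ H ⊆ H') :
    (essImage μ f H ∩ D : Set Y) ≤ᵐ[μ.map f] essImage μ f H' := by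
  rw [ae_le_set, inter_sdiff_assoc,
    map_essImage_inter_eq_zero_iff hf (hD.diff measurableSet_essImage)]
  refine measure_mono_null (fun x hx => ?_) (measure_preimage_compl_essImage_inter hf H')
  exact ⟨hx.1.2, h ⟨hx.1.1, hx.2⟩⟩

theorem iUnion_ae_le_essImage {ι : Type*} [Countable ι] (hf : Measurable f) {B : ι → Set Y}
    (hB : ∀ i, MeasurableSet (B i)) {S : ι → Set X} (h : ∀ i, B i ≤ᵐ[μ.map f] essImage μ f (S i))
    (hS : ∀ i, f ⁻¹' B i ∩ S i ⊆ H) : (⋃ i, B i) ≤ᵐ[μ.map f] essImage μ f H := by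
  have h' := eventually_countable_forall.2 fun i =>
    essImage_inter_ae_le (μ := μ) hf (hB i) (hS i)
  filter_upwards [eventually_countable_forall.2 h, h'] with y hy hy' hyB
  obtain ⟨i, hi⟩ := mem_iUnion.1 hyB
  exact hy' i ⟨hy i hi, hi⟩

theorem exists_measurableSet_iUnion_ae_le_essImage {ι : Type*} [Countable ι] (hf : Measurable f)
    {B : ι → Set Y} (hB : ∀ i, MeasurableSet (B i)) (hB_disj : Pairwise (Disjoint on B))
    (h : ∀ i, ∃ A, MeasurableSet A ∧ B i ≤ᵐ[μ.map f] essImage μ f (H ∩ A) ∧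
      B i ≤ᵐ[μ.map f] essImage μ f (H \ A)) :
    ∃ A, MeasurableSet A ∧ (⋃ i, B i) ≤ᵐ[μ.map f] essImage μ f (H ∩ A) ∧
      (⋃ i, B i) ≤ᵐ[μ.map f] essImage μ f (H \ A) := by
  choose A hA h_inter h_diff using h
  have h_mem {i x} (hx : x ∈ f ⁻¹' B i) : x ∈ ⋃ j, A j ∩ f ⁻¹' B j ↔ x ∈ A i :=
    mem_iUnion_inter_iff_of_pairwise_disjoint (fun i j hij => (hB_disj hij).preimage f) hx
  refine ⟨⋃ i, A i ∩ f ⁻¹' B i, .iUnion fun i => (hA i).inter (hf (hB i)), ?_, ?_⟩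
  · exact iUnion_ae_le_essImage hf hB h_inter fun i x hx => ⟨hx.2.1, (h_mem hx.1).2 hx.2.2⟩
  · exact iUnion_ae_le_essImage hf hB h_diff fun i x hx =>
      ⟨hx.2.1, fun hxA => hx.2.2 ((h_mem hx.1).1 hxA)⟩

theorem essGenerates_comap_restrict (hf : Measurable f) (hH : MeasurableSet H) {B : Set Y}
    (hB : MeasurableSet B) (h : ∀ A, MeasurableSet A →
      (essImage μ f (H ∩ A) ∩ essImage μ f (H \ A) : Set Y) ≤ᵐ[μ.map f] B) :
    EssGenerates (.comap f inferInstance) (μ.restrict (f ⁻¹' Bᶜ ∩ H)) := by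
  intro A hA
  refine ⟨f ⁻¹' essImage μ f (H ∩ A), ⟨_, measurableSet_essImage, rfl⟩, ?_⟩
  filter_upwards [ae_restrict_of_ae (ae_mem_essImage hf (H ∩ A)),
    ae_restrict_of_ae (ae_mem_essImage hf (H \ A)),
    ae_restrict_of_ae (ae_of_ae_map hf.aemeasurable (h A hA)),
    ae_restrict_mem ((hf hB.compl).inter hH)] with x hx_inter hx_diff hxB ⟨hx_not, hxH⟩
  refine propext ⟨fun hxA => hx_inter ⟨hxH, hxA⟩, fun hx => ?_⟩
  by_contra hxA
  exact hx_not (hxB ⟨hx, hx_diff ⟨hxH, hxA⟩⟩)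

theorem exists_measurableSet_essImage_ae_le (hf : Measurable f)
    (hμ : NowhereEssGenerates (.comap f inferInstance) μ) (hH : MeasurableSet H) :
    ∃ A, MeasurableSet A ∧ essImage μ f H ≤ᵐ[μ.map f] essImage μ f (H ∩ A) ∧
      essImage μ f H ≤ᵐ[μ.map f] essImage μ f (H \ A) := by
  -- For a maximal `B` over which `H` splits, `f` essentially generates the part of `H` off `B`.
  obtain ⟨B, hB, ⟨A, hA, hBA, hBA'⟩, hB_max⟩ := exists_measurableSet_forall_ae_le (μ.map f)
    (p := fun B => ∃ A, MeasurableSet A ∧ B ≤ᵐ[μ.map f] essImage μ f (H ∩ A) ∧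
      B ≤ᵐ[μ.map f] essImage μ f (H \ A))
    (fun _ _ hst ⟨A, hA, h, h'⟩ =>
      ⟨A, hA, hst.eventuallyLE.trans h, hst.eventuallyLE.trans h'⟩)
    ⟨∅, .empty, (empty_subset _).eventuallyLE, (empty_subset _).eventuallyLE⟩
    fun _ hs hs_disj h => exists_measurableSet_iUnion_ae_le_essImage hf hs hs_disj h
  have h_null : μ (f ⁻¹' Bᶜ ∩ H) = 0 := hμ _ ((hf hB.compl).inter hH) <|
    essGenerates_comap_restrict hf hH hB fun S hS =>
      hB_max _ (measurableSet_essImage.inter measurableSet_essImage)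
        ⟨S, hS, inter_subset_left.eventuallyLE, inter_subset_right.eventuallyLE⟩
  have h_le : essImage μ f H ≤ᵐ[μ.map f] B := by
    rwa [ae_le_set, Set.sdiff_eq, map_essImage_inter_eq_zero_iff hf hB.compl]
  exact ⟨A, hA, h_le.trans hBA, h_le.trans hBA'⟩

section Closed

variable [TopologicalSpace X] [OpensMeasurableSpace X] [μ.WeaklyRegular]

theorem exists_isClosed_map_essImage_sdiff_lt (hf : Measurable f) (hH : MeasurableSet H)
    {ε : ENNReal} (hε : ε ≠ 0) :
    ∃ C ⊆ H, IsClosed C ∧ μ.map f (essImage μ f H \ essImage μ f C) < ε := by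
  have hac : (μ.map f).restrict (essImage μ f H) ≪ (μ.restrict H).map f := by
    refine .mk fun s hs h => ?_
    rwa [Measure.restrict_apply hs, inter_comm, map_essImage_inter_eq_zero_iff hf hs,
      ← Measure.restrict_apply (hf hs), ← Measure.map_apply hf hs]
  obtain ⟨δ, hδ, hδε⟩ := exists_pos_forall_measure_lt_of_absolutelyContinuous hac hε
  obtain ⟨C, hCH, hC, hCδ⟩ := hH.exists_isClosed_sdiff_lt (measure_ne_top μ H) hδ.ne'
  refine ⟨C, hCH, hC, ?_⟩
  have hC_meas := (measurableSet_essImage (μ := μ) (f := f) (H := C)).compl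
  rw [Set.sdiff_eq, inter_comm, ← Measure.restrict_apply hC_meas]
  refine hδε _ ?_
  rw [Measure.map_apply hf hC_meas, Measure.restrict_apply (hf hC_meas)]
  refine (measure_mono fun x hx => ?_).trans_lt ((measure_union_le (H \ C)
    (f ⁻¹' (essImage μ f C)ᶜ ∩ C)).trans_lt ?_)
  · by_cases hxC : x ∈ C
    · exact .inr ⟨hx.1, hxC⟩
    · exact .inl ⟨hx.2, hxC⟩
  · rwa [measure_preimage_compl_essImage_inter hf C, add_zero]

theorem exists_disjoint_isClosed_map_essImage_sdiff_lt (hf : Measurable f)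
    (hμ : NowhereEssGenerates (.comap f inferInstance) μ) (hH : MeasurableSet H)
    {ε : Bool → ENNReal} (hε : ∀ b, ε b ≠ 0) :
    ∃ C : Bool → Set X, Pairwise (Disjoint on C) ∧ ∀ b, C b ⊆ H ∧ IsClosed (C b) ∧
      μ.map f (essImage μ f H \ essImage μ f (C b)) < ε b := by
  obtain ⟨A, hA, h_inter, h_diff⟩ := exists_measurableSet_essImage_ae_le hf hμ hH
  obtain ⟨C₀, hC₀H, hC₀, hC₀ε⟩ :=
    exists_isClosed_map_essImage_sdiff_lt (μ := μ) hf (hH.diff hA) (hε false)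
  obtain ⟨C₁, hC₁H, hC₁, hC₁ε⟩ :=
    exists_isClosed_map_essImage_sdiff_lt (μ := μ) hf (hH.inter hA) (hε true)
  refine ⟨fun b => cond b C₁ C₀, pairwise_disjoint_on_bool.2 ?_,
    Bool.forall_bool.2 ⟨⟨?_, hC₀, ?_⟩, ?_, hC₁, ?_⟩⟩
  · exact disjoint_sdiff_right.mono (hC₁H.trans inter_subset_right) hC₀H
  · exact hC₀H.trans sdiff_subset
  · exact (measure_mono_ae (h_diff.diff (.refl _ _))).trans_lt hC₀ε
  · exact hC₁H.trans inter_subset_left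
  · exact (measure_mono_ae (h_inter.diff (.refl _ _))).trans_lt hC₁ε

theorem exists_cantorScheme_map_essImage_sdiff_lt (hf : Measurable f)
    (hμ : NowhereEssGenerates (.comap f inferInstance) μ) {ε : Bool × List Bool → ENNReal}
    (hε : ∀ i, ε i ≠ 0) :
    ∃ A : List Bool → Set X, A [] = univ ∧ (∀ l, IsClosed (A l)) ∧ CantorScheme.Antitone A ∧
      CantorScheme.Disjoint A ∧
      ∀ i, μ.map f (essImage μ f (A i.2) \ essImage μ f (A (i.1 :: i.2))) < ε i := by
  choose C hC_disj hC using fun (l : List Bool) (H : {H : Set X // IsClosed H}) =>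
    exists_disjoint_isClosed_map_essImage_sdiff_lt hf hμ H.2.measurableSet fun b => hε (b, l)
  let A : List Bool → {H : Set X // IsClosed H} :=
    List.rec ⟨univ, isClosed_univ⟩ fun b l H => ⟨C l H b, (hC l H b).2.1⟩
  exact ⟨fun l => (A l).1, rfl, fun l => (A l).2, fun l b => (hC l (A l) b).1,
    fun l => hC_disj l (A l), fun ⟨b, l⟩ => (hC l (A l) b).2.2⟩

end Closed

end EssImage

section LooseFunction

open PiNat

variable {X Y β : Type*} {A : List β → Set X}

theorem eq_of_forall_mem_res (hA : CantorScheme.Disjoint A) {x : X} {p q : ℕ → β}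
    (hp : ∀ n, x ∈ A (res p n)) (hq : ∀ n, x ∈ A (res q n)) : p = q := by
  refine res_injective (funext fun n => ?_)
  induction n with
  | zero => rfl
  | succ n ih =>
    have hp' := hp (n + 1)
    have hq' := hq (n + 1)
    simp only [res_succ, ← ih] at hp' hq' ⊢
    rw [(hA (res p n)).eq (not_disjoint_iff.2 ⟨x, hp', hq'⟩)]

variable [TopologicalSpace X]

theorem isClosed_setOf_forall_mem_res [TopologicalSpace β] [DiscreteTopology β]
    (hA : ∀ l, IsClosed (A l)) : IsClosed {z : X × (ℕ → β) | ∀ n, z.1 ∈ A (res z.2 n)} := by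
  simp only [ofPred_forall]
  refine isClosed_iInter fun n => isOpen_compl_iff.1 (isOpen_iff_mem_nhds.2 fun ⟨x, p⟩ hxp => ?_)
  filter_upwards [prod_mem_nhds ((hA (res p n)).isOpen_compl.mem_nhds hxp)
    ((isOpen_cylinder _ p n).mem_nhds (self_mem_cylinder p n))] with ⟨y, q⟩ ⟨hy, hq⟩
  rw [cylinder_eq_res, mem_ofPred_eq] at hq
  rwa [mem_compl_iff, mem_ofPred_eq, hq]

theorem exists_continuousOn_of_cantorScheme [TopologicalSpace β] [DiscreteTopology β] [Finite β]
    [Nonempty β] (hA : ∀ l, IsClosed (A l)) (hA_disj : CantorScheme.Disjoint A) :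
    ∃ (D : Set X) (φ : X → ℕ → β), IsClosed D ∧ ContinuousOn φ D ∧
      ∀ p x, (∀ n, x ∈ A (res p n)) → x ∈ D ∧ φ x = p := by
  let G : Set (X × (ℕ → β)) := {z | ∀ n, z.1 ∈ A (res z.2 n)}
  have hG : IsClosed G := isClosed_setOf_forall_mem_res hA
  have h_exists (x : X) (hx : x ∈ Prod.fst '' G) : ∃ p, (x, p) ∈ G := by
    obtain ⟨⟨x, p⟩, hp, rfl⟩ := hx
    exact ⟨p, hp⟩
  choose! φ hφ using h_exists
  have hφ_eq {x p} (hp : (x, p) ∈ G) : φ x = p :=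
    eq_of_forall_mem_res hA_disj (hφ x ⟨_, hp, rfl⟩) hp
  refine ⟨Prod.fst '' G, φ, isClosedMap_fst_of_compactSpace _ hG, ?_,
    fun p x hp => ⟨⟨(x, p), hp, rfl⟩, hφ_eq hp⟩⟩
  refine continuousOn_iff_isClosed.2 fun t ht => ⟨Prod.fst '' (G ∩ Prod.snd ⁻¹' t),
    isClosedMap_fst_of_compactSpace _ (hG.inter (ht.preimage continuous_snd)), ?_⟩
  ext x
  constructor
  · exact fun ⟨hxt, hxD⟩ => ⟨⟨(x, φ x), ⟨hφ x hxD, hxt⟩, rfl⟩, hxD⟩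
  · rintro ⟨⟨⟨x, p⟩, ⟨hp, hpt⟩, rfl⟩, hxD⟩
    exact ⟨(hφ_eq hp).symm ▸ hpt, hxD⟩

variable [CompactSpace X] [TopologicalSpace Y] {f : X → Y}

theorem exists_mem_fiber_forall_mem_res [T1Space Y] (hf : Continuous f)
    (hA : ∀ l, IsClosed (A l)) (hA_anti : CantorScheme.Antitone A) {y : Y}
    (hy : ∀ l, y ∈ f '' A l) (p : ℕ → β) : ∃ x, f x = y ∧ ∀ n, x ∈ A (res p n) := by
  have h_closed (n : ℕ) : IsClosed (A (res p n) ∩ f ⁻¹' {y}) :=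
    (hA _).inter (isClosed_singleton.preimage hf)
  obtain ⟨x, hx_mem⟩ := IsCompact.nonempty_iInter_of_sequence_nonempty_isCompact_isClosed
    (fun n => A (res p n) ∩ f ⁻¹' {y})
    (fun n => inter_subset_inter_left _ (hA_anti (res p n) (p n))) (fun n => hy (res p n))
    (h_closed 0).isCompact h_closed
  have hx := mem_iInter.1 hx_mem
  exact ⟨x, (hx 0).2, fun n => (hx n).1⟩

theorem exists_looseFunction_of_cantorScheme [TopologicalSpace β] [DiscreteTopology β] [Finite β]
    [Nonempty β] [T1Space Y] (hf : Continuous f) (hA : ∀ l, IsClosed (A l))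
    (hA_anti : CantorScheme.Antitone A) (hA_disj : CantorScheme.Disjoint A)
    (hQ : ¬ IsScatteredSet (⋂ l, f '' A l)) :
    ∃ (D : Set X) (φ : X → ℕ → β), LooseFunction f D φ := by
  obtain ⟨D, φ, hD, hφ, h⟩ := exists_continuousOn_of_cantorScheme hA hA_disj
  refine ⟨D, φ, hD, hφ, _, hQ, fun y hy => eq_univ_of_forall fun p => ?_⟩
  obtain ⟨x, hxy, hxp⟩ := exists_mem_fiber_forall_mem_res hf hA hA_anti (mem_iInter.1 hy) p
  obtain ⟨hxD, hφx⟩ := h p x hxp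
  exact ⟨x, ⟨hxy, hxD⟩, hφx⟩

theorem not_weaklyCTight_of_nowhereEssGenerates [MeasurableSpace X] [OpensMeasurableSpace X]
    [T2Space Y] [SecondCountableTopology Y] [MeasurableSpace Y] [BorelSpace Y] {μ : Measure X}
    [IsFiniteMeasure μ] [μ.WeaklyRegular] (hμ : μ ≠ 0) (hf : Continuous f)
    (hf_fiber : ∀ y, μ (f ⁻¹' {y}) = 0)
    (hf_gen : NowhereEssGenerates (.comap f inferInstance) μ) : ¬ WeaklyCTight f := by
  have : NullSingletonClass (μ.map f) :=
    ⟨fun y => by rw [Measure.map_apply hf.measurable (measurableSet_singleton y), hf_fiber]⟩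
  have hμ' : μ.map f (essImage μ f univ) ≠ 0 := by
    rwa [Ne, map_essImage_eq_zero_iff hf.measurable, Measure.measure_univ_eq_zero]
  obtain ⟨ε, hε_pos, hε_sum⟩ := ENNReal.exists_pos_sum_of_countable' hμ' (Bool × List Bool)
  obtain ⟨A, hA_nil, hA, hA_anti, hA_disj, hA_lt⟩ :=
    exists_cantorScheme_map_essImage_sdiff_lt hf.measurable hf_gen fun i => (hε_pos i).ne'
  have h_ess : μ.map f (⋂ l, essImage μ f (A l)) ≠ 0 := by
    refine measure_iInter_list_ne_zero ?_
    rw [hA_nil]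
    exact (ENNReal.tsum_le_tsum fun i => (hA_lt i).le).trans_lt hε_sum
  have h_le : (⋂ l, essImage μ f (A l) : Set Y) ≤ᵐ[μ.map f] (⋂ l, f '' A l : Set Y) :=
    Filter.EventuallyLE.countable_iInter fun l => essImage_ae_le_image hf.measurable
      ((hA l).isCompact.image hf).isClosed.measurableSet
  exact not_not_intro <| exists_looseFunction_of_cantorScheme hf hA hA_anti hA_disj <|
    not_isScatteredSet_of_measure_ne_zero fun h => h_ess (measure_mono_null_ae h_le h)

end LooseFunction

section Dissipated

variable {X : Type u} [TopologicalSpace X] [MeasurableSpace X] {μ : Measure X}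

theorem exists_continuous_measure_ne_one_lt [CompletelyRegularSpace X] [μ.OuterRegular] {x : X}
    (hx : μ {x} = 0) {ε : ENNReal} (hε : ε ≠ 0) :
    ∃ g : X → unitInterval, Continuous g ∧ g x ≠ 1 ∧ μ {z | g z ≠ 1} < ε := by
  obtain ⟨U, hxU, hU, hUε⟩ := ({x} : Set X).exists_isOpen_lt_of_lt ε (hx.trans_lt hε.bot_lt)
  obtain ⟨g, hg, hgx, hgU⟩ := CompletelyRegularSpace.completely_regular x Uᶜ hU.isClosed_compl
    (not_not_intro (hxU rfl))
  have hgU' : {z | g z ≠ 1} ⊆ U := fun z hz => not_not.1 (mt (@hgU z) hz)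
  exact ⟨g, hg, hgx ▸ zero_ne_one, (measure_mono hgU').trans_lt hUε⟩

variable [CompactSpace X]

theorem exists_continuous_measure_fiber_eq_zero [CompletelyRegularSpace X] [μ.OuterRegular]
    (hμ : ∀ x, μ {x} = 0) :
    ∃ (ι : Type u) (_ : Countable ι) (g : X → ι → unitInterval), Continuous g ∧
      ∀ x, μ {z | g z = g x} = 0 := by
  choose g hg hg_ne hg_lt using fun (n : ℕ) (x : X) =>
    exists_continuous_measure_ne_one_lt (hμ x) (ENNReal.inv_ne_zero.2 (ENNReal.natCast_ne_top n))
  choose t ht using fun n => isCompact_univ.elim_finite_subcover (fun x => {z | g n x z ≠ 1})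
    (fun x => isOpen_ne.preimage (hg n x)) fun x _ => mem_iUnion.2 ⟨x, hg_ne n x⟩
  refine ⟨Σ n, t n, inferInstance, fun z i => g i.1 i.2 z, continuous_pi fun i => hg i.1 i.2,
    fun x => ?_⟩
  by_contra hx
  obtain ⟨n, hn⟩ := ENNReal.exists_inv_nat_lt hx
  obtain ⟨y, hy, hxy⟩ := mem_iUnion₂.1 (ht n (mem_univ x))
  refine (hn.trans_le (measure_mono fun z hz => ?_)).not_gt (hg_lt n y)
  exact (congrFun hz ⟨n, y, hy⟩).trans_ne hxy

theorem IsWeaklyCDissipated.measure_eq_zero [T2Space X] [BorelSpace X]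
    (hX : IsWeaklyCDissipated X) [IsFiniteMeasure μ] [μ.Regular]
    (h : ∀ F, MeasurableSet F → IsEssCountablyGenerated (μ.restrict F) → μ F = 0) : μ = 0 := by
  obtain ⟨ι, _, g, hg, hg_fiber⟩ := exists_continuous_measure_fiber_eq_zero fun x =>
    h {x} (measurableSet_singleton x) (isEssCountablyGenerated_restrict_singleton (μ := μ) x)
  obtain ⟨Y, _, _, _, f, hf, hf_tight, hfg⟩ := hX (ι → unitInterval) g hg
  borelize Y
  by_contra hμ
  refine not_weaklyCTight_of_nowhereEssGenerates hμ hf (fun y => ?_) (fun F hF hgen => ?_) hf_tight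
  · obtain hy | ⟨x, rfl⟩ := (f ⁻¹' {y}).eq_empty_or_nonempty
    · rw [hy, measure_empty]
    · exact measure_mono_null (fun z hz => hfg _ _ hz) (hg_fiber x)
  · exact h F hF ⟨_, hf.measurable.comap_le, .comap _, hgen⟩

end Dissipated

theorem IsWeaklyCDissipated.isSeparable {X : Type u} [TopologicalSpace X] [CompactSpace X]
    [T2Space X] [MeasurableSpace X] [BorelSpace X] (hX : IsWeaklyCDissipated X) (μ : Measure X)
    [IsFiniteMeasure μ] [μ.Regular] : MeasureTheory.IsSeparable μ := by
  obtain ⟨s, -, hs_gen, hs_compl⟩ := exists_isEssCountablyGenerated_restrict_max μ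
  have : (μ.restrict sᶜ).Regular := .restrict_of_measure_ne_top (measure_ne_top _ _)
  have h_compl : μ sᶜ = 0 := Measure.restrict_eq_zero.1 (hX.measure_eq_zero hs_compl)
  rw [Measure.restrict_eq_self_of_ae_mem (mem_ae_iff.2 h_compl)] at hs_gen
  exact hs_gen.isSeparable

/-- Every Radon measure (finite regular Borel measure) on a weakly c-dissipated compact
Hausdorff space is separable: there is a countable family `𝒞` of Borel sets such that
every Borel set is approximated in measure by members of `𝒞`. -/
theorem stmt18 {X : Type u}
    [TopologicalSpace X] [CompactSpace X] [T2Space X]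
    [MeasurableSpace X] [BorelSpace X]
    (hX : IsWeaklyCDissipated X)
    (μ : Measure X) [IsFiniteMeasure μ] [μ.Regular] :
    ∃ 𝒞 : Set (Set X), 𝒞.Countable ∧ (∀ B ∈ 𝒞, MeasurableSet B) ∧
      ∀ A : Set X, MeasurableSet A → ∀ ε : ENNReal, 0 < ε →
        ∃ B ∈ 𝒞, μ (symmDiff A B) < ε := by
  have := hX.isSeparable μ
  obtain ⟨𝒞, h𝒞_countable, h𝒞⟩ := exists_countable_measureDense μ
  refine ⟨𝒞, h𝒞_countable, fun B hB => h𝒞.measurable B hB, fun A hA ε hε => ?_⟩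
  obtain ⟨δ, hδ, hδε⟩ := ENNReal.lt_iff_exists_nnreal_btwn.1 hε
  obtain ⟨B, hB, hAB⟩ := h𝒞.approx A hA (measure_ne_top μ A) δ (by exact_mod_cast hδ)
  exact ⟨B, hB, (hAB.trans_eq ENNReal.ofReal_coe_nnreal).trans hδε⟩
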